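/- Let p ≥ 5 be odd and let k₁, …, k_p be integers with k := k₁ − k₂ + ⋯ + k_p and Φ := k² − k₁² + k₂² − ⋯ − k_p². If the maximum of |k₁|, …, |k_p| is attained at an even index (i.e. |k_{i₀}| = k₁* for some even i₀), then Φ ≥ k² + (k₁*)² − p·(k₂*)². In particular, if moreover p·(k₂*)² ≤ (k₁*)²/2, then Φ ≥ (k₁*)²/2. -/

import Mathlib

open scoped BigOperators

/-!
Each index `i ≠ i₀` contributes at least `-M ^ 2` to `-∑ i, ε i * κ i ^ 2`, whereas the coefficient
at `i₀` is at most `-1`, so that index contributes at least `+κ i₀ ^ 2`. The square of the signed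
sum `k` is carried along unchanged, and is discarded for the second inequality.
-/

/-- The resonance function `Φ = k² - ∑ i, ε i * κ i²` of the frequencies `κ`, where
`k = ∑ i, ε i * κ i`. The alternating signs of the paper are `ε j = (-1) ^ j` on `Fin p`. -/
def resonance {ι R : Type*} [Fintype ι] [CommRing R] (ε κ : ι → R) : R :=
  (∑ i, ε i * κ i) ^ 2 - ∑ i, ε i * κ i ^ 2

section OrderedRing

variable {ι R : Type*} [CommRing R] [LinearOrder R] [IsStrictOrderedRing R]

lemma sum_mul_sq_le_card_mul_sq {s : Finset ι} {ε κ : ι → R} {M : R}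
    (hε : ∀ i ∈ s, ε i ≤ 1) (hM : ∀ i ∈ s, |κ i| ≤ M) :
    ∑ i ∈ s, ε i * κ i ^ 2 ≤ s.card * M ^ 2 := by
  rw [← nsmul_eq_mul]
  refine Finset.sum_le_card_nsmul s _ _ fun i hi => ?_
  calc
    ε i * κ i ^ 2 ≤ κ i ^ 2 := mul_le_of_le_one_left (sq_nonneg _) (hε i hi)
    _ ≤ M ^ 2 := sq_le_sq' (neg_le_of_abs_le (hM i hi)) (le_of_abs_le (hM i hi))

variable [Fintype ι]

lemma sum_mul_sq_le_neg_sq_add {ε κ : ι → R} {i₀ : ι} {M : R} (hε₀ : ε i₀ ≤ -1)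
    (hε : ∀ i, i ≠ i₀ → ε i ≤ 1) (hM : ∀ i, i ≠ i₀ → |κ i| ≤ M) :
    ∑ i, ε i * κ i ^ 2 ≤ -κ i₀ ^ 2 + (Fintype.card ι - 1) * M ^ 2 := by
  classical
  have h_at : ε i₀ * κ i₀ ^ 2 ≤ -κ i₀ ^ 2 := by
    simpa only [neg_one_mul] using mul_le_mul_of_nonneg_right hε₀ (sq_nonneg (κ i₀))
  have h_off : ∑ i ∈ Finset.univ.erase i₀, ε i * κ i ^ 2 ≤ (Fintype.card ι - 1) * M ^ 2 := by
    simpa only [Finset.cast_card_erase_of_mem (Finset.mem_univ i₀), Finset.card_univ] using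
      sum_mul_sq_le_card_mul_sq (s := Finset.univ.erase i₀)
        (fun i hi => hε i (Finset.ne_of_mem_erase hi))
        (fun i hi => hM i (Finset.ne_of_mem_erase hi))
  rw [← Finset.add_sum_erase _ _ (Finset.mem_univ i₀)]
  exact add_le_add h_at h_off

lemma sq_add_sq_sub_card_mul_sq_le_resonance {ε κ : ι → R} {i₀ : ι} {M : R} (hε₀ : ε i₀ ≤ -1)
    (hε : ∀ i, i ≠ i₀ → ε i ≤ 1) (hM : ∀ i, i ≠ i₀ → |κ i| ≤ M) :
    (∑ i, ε i * κ i) ^ 2 + κ i₀ ^ 2 - Fintype.card ι * M ^ 2 ≤ resonance ε κ := by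
  have h_sum := sum_mul_sq_le_neg_sq_add hε₀ hε hM
  unfold resonance
  linarith [sq_nonneg M]

end OrderedRing

theorem stmt3_general {ι K : Type*} [Fintype ι] [Field K] [LinearOrder K] [IsStrictOrderedRing K]
    {ε κ : ι → K} {i₀ : ι} {M : K} (hε₀ : ε i₀ ≤ -1)
    (hε : ∀ i, i ≠ i₀ → ε i ≤ 1) (hM : ∀ i, i ≠ i₀ → |κ i| ≤ M) :
    (∑ i, ε i * κ i) ^ 2 + κ i₀ ^ 2 - Fintype.card ι * M ^ 2 ≤ resonance ε κ ∧
      (Fintype.card ι * M ^ 2 ≤ κ i₀ ^ 2 / 2 → κ i₀ ^ 2 / 2 ≤ resonance ε κ) := by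
  have h_lower := sq_add_sq_sub_card_mul_sq_le_resonance hε₀ hε hM
  exact ⟨h_lower, fun h_small => by linarith [sq_nonneg (∑ i, ε i * κ i)]⟩

/-- If the largest frequency is attained at an even paper index (i.e. an odd `Fin p` index
`i0`, since paper index `ℓ` corresponds to `Fin p` index `ℓ - 1`), then
`Φ ≥ k² + (k₁*)² − p (k₂*)²`; in particular if moreover `p (k₂*)² ≤ (k₁*)²/2` then
`Φ ≥ (k₁*)²/2`.  Here `k₂*` is pinned down as the attained maximum of `|κ i|` over `i ≠ i0`. -/
theorem stmt3 (p : ℕ) (hp : Odd p) (hp5 : 5 ≤ p)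
    (κ : Fin p → ℤ) (i0 : Fin p) (hi0 : Odd (i0:ℕ))
    (hmax : ∀ i, |κ i| ≤ |κ i0|)
    (k2 : ℤ)
    (hk2ub : ∀ i, i ≠ i0 → |κ i| ≤ k2)
    (hk2mem : ∃ i, i ≠ i0 ∧ |κ i| = k2) :
    ((∑ j : Fin p, (-1:ℤ)^(j:ℕ) * κ j)^2 - ∑ j : Fin p, (-1:ℤ)^(j:ℕ) * (κ j)^2
        ≥ (∑ j : Fin p, (-1:ℤ)^(j:ℕ) * κ j)^2 + (κ i0)^2 - (p:ℤ) * k2^2)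
    ∧ ((p:ℝ) * (k2:ℝ)^2 ≤ (κ i0 : ℝ)^2 / 2 →
        (((∑ j : Fin p, (-1:ℤ)^(j:ℕ) * κ j)^2 - ∑ j : Fin p, (-1:ℤ)^(j:ℕ) * (κ j)^2 : ℤ) : ℝ)
          ≥ (κ i0 : ℝ)^2 / 2) := by
  have h := stmt3_general (ε := fun j : Fin p => (-1 : ℝ) ^ (j : ℕ)) (κ := fun j => κ j) (M := k2)
    hi0.neg_one_pow.le (fun j _ => (le_abs_self _).trans (abs_neg_one_pow j).le) (mod_cast hk2ub)
  simp only [resonance, Fintype.card_fin] at h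
  exact_mod_cast h
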